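/- Fix k, α₁, θ ∈ ℝ. For ε > 0 let d0(ε) = Re(Tr(U_YY(k·√ε)))/2, where the walk unitary U_YY is taken with coin angle α = α₁·√ε and twist angle θ. Then the continuous-limit energy spectrum is lim_{ε→0⁺} arccos(d0(ε))/(2ε) = |k·(2α₁ − k·sin θ)|. -/

import Mathlib

open Matrix Filter Topology

noncomputable def σx : Matrix (Fin 2) (Fin 2) ℂ := !![0, 1; 1, 0]
noncomputable def σy : Matrix (Fin 2) (Fin 2) ℂ := !![0, -Complex.I; Complex.I, 0]
noncomputable def σz : Matrix (Fin 2) (Fin 2) ℂ := !![1, 0; 0, -1]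

/-- Rotation about the x-axis by angle `t`. -/
noncomputable def Rx (t : ℝ) : Matrix (Fin 2) (Fin 2) ℂ :=
  !![(Real.cos (t/2) : ℂ), -Complex.I * Real.sin (t/2);
     -Complex.I * Real.sin (t/2), (Real.cos (t/2) : ℂ)]

/-- Rotation about the y-axis by angle `t`. -/
noncomputable def Ry (t : ℝ) : Matrix (Fin 2) (Fin 2) ℂ :=
  !![(Real.cos (t/2) : ℂ), -(Real.sin (t/2) : ℂ);
     (Real.sin (t/2) : ℂ), (Real.cos (t/2) : ℂ)]

/-- Rotation about the z-axis by angle `t`. -/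
noncomputable def Rz (t : ℝ) : Matrix (Fin 2) (Fin 2) ℂ :=
  !![Complex.exp (-(Complex.I * t) / 2), 0; 0, Complex.exp ((Complex.I * t) / 2)]

/-- Fourier-space shift operator at momentum `κ`. -/
noncomputable def Sh (κ : ℝ) : Matrix (Fin 2) (Fin 2) ℂ :=
  !![Complex.exp (Complex.I * κ), 0; 0, Complex.exp (-(Complex.I * κ))]

/-- The coin operator `Cα`. -/
noncomputable def Calpha (α : ℝ) : Matrix (Fin 2) (Fin 2) ℂ :=
  !![(Real.sin α : ℂ), -Complex.I * Real.cos α;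
     Complex.I * Real.cos α, -(Real.sin α : ℂ)]

/-- The coin operator `Cβ`. -/
noncomputable def Cbeta (α : ℝ) : Matrix (Fin 2) (Fin 2) ℂ :=
  !![-(Real.cos α : ℂ), -Complex.I * Real.sin α;
     -Complex.I * Real.sin α, -(Real.cos α : ℂ)]

/-- The massless homogeneous Y–Y twisted quantum walk unitary at momentum `k`,
coin angle `α` and twist angle `θ`: `U_YY = (W_β · W_α)²` with
`W_α = S(k)·Cα` and `W_β = R_y(−θ)·S(k)·R_y(θ)·Cβ`. -/
noncomputable def UYY (k α θ : ℝ) : Matrix (Fin 2) (Fin 2) ℂ :=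
  (Ry (-θ) * Sh k * Ry θ * Cbeta α * (Sh k * Calpha α)) *
    (Ry (-θ) * Sh k * Ry θ * Cbeta α * (Sh k * Calpha α))

/-- The one-step walk operator `W_β · W_α`, whose square is `UYY`. -/
noncomputable def stepYY (k α θ : ℝ) : Matrix (Fin 2) (Fin 2) ℂ :=
  Ry (-θ) * Sh k * Ry θ * Cbeta α * (Sh k * Calpha α)

/-- The sine of half the quasi-energy of `UYY`, up to sign. -/
noncomputable def halfSine (k α θ : ℝ) : ℝ :=
  Real.sin k * (Real.cos k * Real.sin (2 * α) - Real.sin k * Real.sin θ * Real.cos (2 * α))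

lemma Complex.ofReal_cos_sq_add_sin_sq (x : ℝ) :
    (Real.cos x : ℂ) ^ 2 + (Real.sin x : ℂ) ^ 2 = 1 := by
  exact_mod_cast Real.cos_sq_add_sin_sq x

lemma det_Ry (t : ℝ) : (Ry t).det = 1 := by
  rw [Ry, Matrix.det_fin_two_of]
  linear_combination Complex.ofReal_cos_sq_add_sin_sq (t / 2)

lemma det_Sh (κ : ℝ) : (Sh κ).det = 1 := by
  rw [Sh, Matrix.det_fin_two_of, ← Complex.exp_add]
  simp

lemma det_Calpha (α : ℝ) : (Calpha α).det = -1 := by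
  rw [Calpha, Matrix.det_fin_two_of]
  linear_combination -Complex.ofReal_cos_sq_add_sin_sq α +
    (Real.cos α : ℂ) ^ 2 * Complex.I_sq

lemma det_Cbeta (α : ℝ) : (Cbeta α).det = 1 := by
  rw [Cbeta, Matrix.det_fin_two_of]
  linear_combination Complex.ofReal_cos_sq_add_sin_sq α -
    (Real.sin α : ℂ) ^ 2 * Complex.I_sq

lemma det_stepYY (k α θ : ℝ) : (stepYY k α θ).det = -1 := by
  simp [stepYY, Matrix.det_mul, det_Ry, det_Sh, det_Calpha, det_Cbeta]

lemma Sh_eq_cos_sin (κ : ℝ) :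
    Sh κ = !![(Real.cos κ : ℂ) + Real.sin κ * Complex.I, 0;
      0, (Real.cos κ : ℂ) - Real.sin κ * Complex.I] := by
  have h : -(Complex.I * (κ : ℂ)) = (-κ : ℂ) * Complex.I := by ring
  rw [Sh, h, mul_comm Complex.I, Complex.exp_mul_I, Complex.exp_mul_I]
  simp [sub_eq_add_neg]

lemma Ry_neg_mul_Sh_mul_Ry (k θ : ℝ) :
    Ry (-θ) * Sh k * Ry θ =
      !![(Real.cos k : ℂ) + Real.sin k * Real.cos θ * Complex.I,
          -(Real.sin k * Real.sin θ * Complex.I);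
        -(Real.sin k * Real.sin θ * Complex.I),
          (Real.cos k : ℂ) - Real.sin k * Real.cos θ * Complex.I] := by
  have h1 := Complex.ofReal_cos_sq_add_sin_sq (θ / 2)
  have hc : (Real.cos θ : ℂ) = (Real.cos (θ / 2) : ℂ) ^ 2 - (Real.sin (θ / 2) : ℂ) ^ 2 := by
    have h := Real.cos_two_mul' (θ / 2)
    rw [mul_div_cancel₀ θ two_ne_zero] at h
    exact_mod_cast h
  have hs : (Real.sin θ : ℂ) = 2 * (Real.sin (θ / 2) : ℂ) * (Real.cos (θ / 2) : ℂ) := by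
    have h := Real.sin_two_mul (θ / 2)
    rw [mul_div_cancel₀ θ two_ne_zero] at h
    exact_mod_cast h
  rw [Sh_eq_cos_sin, hc, hs]
  simp only [Ry, neg_div, Real.cos_neg, Real.sin_neg, Complex.ofReal_neg, Matrix.mul_fin_two]
  generalize (Real.cos (θ / 2) : ℂ) = a at *
  generalize (Real.sin (θ / 2) : ℂ) = b at *
  generalize (Real.cos k : ℂ) = c at *
  generalize (Real.sin k : ℂ) = s at *
  ext i j
  fin_cases i <;> fin_cases j <;> simp <;> grind

lemma Cbeta_mul_Sh_mul_Calpha (k α : ℝ) :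
    Cbeta α * (Sh k * Calpha α) =
      !![-(Real.sin k * Real.sin (2 * α) * Complex.I),
          -(Real.sin k * Real.cos (2 * α) : ℂ) + Real.cos k * Complex.I;
        -(Real.sin k * Real.cos (2 * α) : ℂ) - Real.cos k * Complex.I,
          -(Real.sin k * Real.sin (2 * α) * Complex.I)] := by
  have h1 := Complex.ofReal_cos_sq_add_sin_sq α
  have hc : (Real.cos (2 * α) : ℂ) = (Real.cos α : ℂ) ^ 2 - (Real.sin α : ℂ) ^ 2 := by
    exact_mod_cast Real.cos_two_mul' α
  have hs : (Real.sin (2 * α) : ℂ) = 2 * (Real.sin α : ℂ) * (Real.cos α : ℂ) := by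
    exact_mod_cast Real.sin_two_mul α
  rw [Sh_eq_cos_sin, hc, hs]
  simp only [Cbeta, Calpha, Matrix.mul_fin_two]
  generalize (Real.cos α : ℂ) = a at *
  generalize (Real.sin α : ℂ) = b at *
  generalize (Real.cos k : ℂ) = c at *
  generalize (Real.sin k : ℂ) = s at *
  have hI := Complex.I_sq
  ext i j
  fin_cases i <;> fin_cases j <;> simp <;> grind

lemma trace_stepYY (k α θ : ℝ) :
    (stepYY k α θ).trace = -2 * Complex.I * halfSine k α θ := by
  rw [stepYY, Matrix.mul_assoc _ (Cbeta α), Cbeta_mul_Sh_mul_Calpha, Ry_neg_mul_Sh_mul_Ry,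
    Matrix.mul_fin_two, Matrix.trace_fin_two_of, halfSine]
  push_cast
  ring

lemma trace_mul_self_fin_two {R : Type*} [CommRing R] (A : Matrix (Fin 2) (Fin 2) R) :
    (A * A).trace = A.trace ^ 2 - 2 * A.det := by
  simp only [Matrix.trace_fin_two, Matrix.det_fin_two, Matrix.mul_apply, Fin.sum_univ_two]
  ring

lemma trace_UYY_re_div_two (k α θ : ℝ) :
    (UYY k α θ).trace.re / 2 = 1 - 2 * halfSine k α θ ^ 2 := by
  have h : (UYY k α θ).trace = ((2 - 4 * halfSine k α θ ^ 2 : ℝ) : ℂ) := by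
    change (stepYY k α θ * stepYY k α θ).trace = _
    rw [trace_mul_self_fin_two, trace_stepYY, det_stepYY]
    push_cast
    linear_combination 4 * (halfSine k α θ : ℂ) ^ 2 * Complex.I_sq
  rw [h, Complex.ofReal_re]
  ring

lemma arccos_one_sub_two_mul_sq {p : ℝ} (hp : |p| ≤ 1) :
    Real.arccos (1 - 2 * p ^ 2) = 2 * |Real.arcsin p| := by
  obtain ⟨h1, h2⟩ := abs_le.mp hp
  have h : 1 - 2 * p ^ 2 = Real.cos (2 * |Real.arcsin p|) := by
    rw [← abs_two, ← abs_mul, Real.cos_abs, abs_two, Real.cos_two_mul, Real.cos_sq',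
      Real.sin_arcsin h1 h2]
    ring
  rw [h, Real.arccos_cos (by positivity)]
  have := abs_le.mpr ⟨Real.neg_pi_div_two_le_arcsin p, Real.arcsin_le_pi_div_two p⟩
  linarith

lemma tendsto_sin_mul_sqrt_div_sqrt (a : ℝ) :
    Tendsto (fun ε : ℝ => Real.sin (a * √ε) / √ε) (𝓝[>] 0) (𝓝 a) := by
  have hd : HasDerivAt (fun x : ℝ => Real.sin (a * x)) a 0 := by
    simpa using ((hasDerivAt_id (0 : ℝ)).const_mul a).sin
  have hsqrt : Tendsto Real.sqrt (𝓝[>] 0) (𝓝[≠] 0) := by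
    refine tendsto_nhdsWithin_iff.mpr ⟨?_, ?_⟩
    · simpa using (Real.continuous_sqrt.tendsto 0).mono_left nhdsWithin_le_nhds
    · filter_upwards [self_mem_nhdsWithin] with ε hε
      exact (Real.sqrt_pos.mpr hε).ne'
  refine (hd.tendsto_slope.comp hsqrt).congr fun ε => ?_
  simp [slope_def_field]

lemma hasDerivWithinAt_halfSine (k α₁ θ : ℝ) :
    HasDerivWithinAt (fun ε : ℝ => halfSine (k * √ε) (α₁ * √ε) θ)
      (k * (2 * α₁ - k * Real.sin θ)) (Set.Ioi 0) 0 := by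
  rw [hasDerivWithinAt_iff_tendsto_slope' (by simp)]
  have hcos (a : ℝ) : Tendsto (fun ε : ℝ => Real.cos (a * √ε)) (𝓝[>] 0) (𝓝 1) := by
    have h : Continuous fun ε : ℝ => Real.cos (a * √ε) := by fun_prop
    simpa using (h.tendsto 0).mono_left nhdsWithin_le_nhds
  have hk := tendsto_sin_mul_sqrt_div_sqrt k
  have h := hk.mul (((hcos k).mul (tendsto_sin_mul_sqrt_div_sqrt (2 * α₁))).sub
    ((hk.mul_const (Real.sin θ)).mul (hcos (2 * α₁))))
  simp only [one_mul, mul_one] at h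
  refine h.congr' ?_
  filter_upwards [self_mem_nhdsWithin] with ε hε
  have hpos : 0 < √ε := Real.sqrt_pos.mpr hε
  have hsq : √ε ^ 2 = ε := Real.sq_sqrt (le_of_lt hε)
  simp only [slope_def_field, halfSine, Real.sqrt_zero, mul_zero, Real.sin_zero, zero_mul,
    sub_zero, ← mul_assoc]
  generalize √ε = x at hpos hsq
  subst hsq
  field_simp

open Filter Topology in
/-- Continuous-limit energy spectrum of the homogeneous Y–Y twisted walk:
`arccos(d0(ε))/(2ε) → |k(2α₁ − k sin θ)|` as `ε → 0⁺`. -/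
theorem UYY_spectrum_continuous_limit (k α₁ θ : ℝ) :
    Tendsto
      (fun ε : ℝ =>
        Real.arccos ((UYY (k * Real.sqrt ε) (α₁ * Real.sqrt ε) θ).trace.re / 2)
          / (2 * ε))
      (nhdsWithin 0 (Set.Ioi 0))
      (nhds |k * (2 * α₁ - k * Real.sin θ)|) := by
  have hp := hasDerivWithinAt_halfSine k α₁ θ
  have harcsin : HasDerivAt Real.arcsin 1 (halfSine (k * √0) (α₁ * √0) θ) := by
    simpa [halfSine] using Real.hasDerivAt_arcsin (x := 0) (by norm_num) (by norm_num)
  have hslope := harcsin.comp_hasDerivWithinAt (0 : ℝ) hp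
  rw [hasDerivWithinAt_iff_tendsto_slope' (by simp), one_mul] at hslope
  have hsmall : ∀ᶠ ε in 𝓝[>] (0 : ℝ), |halfSine (k * √ε) (α₁ * √ε) θ| < 1 :=
    hp.continuousWithinAt.abs.eventually_lt_const (by simp [halfSine])
  refine hslope.abs.congr' ?_
  filter_upwards [hsmall, self_mem_nhdsWithin] with ε hε hpos
  rw [trace_UYY_re_div_two, arccos_one_sub_two_mul_sq hε.le,
    mul_div_mul_left _ _ two_ne_zero]
  simp [slope_def_field, halfSine, abs_div, abs_of_pos (Set.mem_Ioi.mp hpos)]
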